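/- Let n ≥ 2 and let G be a connected simple graph on n vertices with domination number ⌈n/3⌉ whose spectral radius is minimum among all connected simple graphs on n vertices with domination number ⌈n/3⌉. Then G is isomorphic to the path P_n. -/

import Mathlib

open SimpleGraph

/-- Adjacency matrix of a simple graph over ℝ. -/
noncomputable def adjMat {V : Type*} (G : SimpleGraph V) : Matrix V V ℝ :=
  Matrix.of fun i j => @ite ℝ (G.Adj i j) (Classical.propDecidable _) 1 0

/-- Spectral radius: the largest eigenvalue (supremum of the real spectrum)
of the adjacency matrix. -/
noncomputable def specRad {V : Type*} [Fintype V] [DecidableEq V]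
    (G : SimpleGraph V) : ℝ :=
  sSup (spectrum ℝ (adjMat G))

/-- `D` is a dominating set of `G`. -/
def IsDomSet {V : Type*} (G : SimpleGraph V) (D : Finset V) : Prop :=
  ∀ v ∉ D, ∃ u ∈ D, G.Adj u v

/-- The domination number of `G`. -/
noncomputable def domNum {V : Type*} [Fintype V] (G : SimpleGraph V) : ℕ :=
  sInf {k | ∃ D : Finset V, IsDomSet G D ∧ D.card = k}

/-!
Let `G` be connected on `n` vertices with `ρ(G) ≤ ρ(P_n) ≤ 2 cos t`, where `t = π / (n + 1)`. Its
Perron vector `z` is positive and satisfies `A z ≤ 2 cos t • z`. Put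
`f k = sin ((k - 1) t) / sin (k t)`. If `u` is the root of a subtree with `k < n` vertices, then the
sum of `z` over the neighbours of `u` in the subtree is at least `f k * z u`, with equality only for
an induced path ending at `u`: joining a branch with `a` vertices to the root of a subtree with `b`
vertices raises the factor `f b` to `f (a + 1) + f b`, which exceeds `f (a + b)` as soon as `b > 1`.
Now take a vertex `r` whose removal leaves `G` connected and hang a spanning tree of the rest of `G`
from `r`. The bound `A z ≤ 2 cos t • z` at `r` is the equality case, because `f n = 2 cos t`.
-/

open scoped Matrix Real
open Real (sin cos)

section PositiveSupersolution

variable {V : Type*} [Fintype V] {A : Matrix V V ℝ} {z : V → ℝ} {lam μ r : ℝ}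

/-- A positive vector `z` with `A z ≤ lam z` entrywise: the certificate that bounds the real
spectrum of a nonnegative matrix `A` by `lam`. -/
structure IsPositiveSupersolution (A : Matrix V V ℝ) (lam : ℝ) (z : V → ℝ) : Prop where
  pos : ∀ v, 0 < z v
  mulVec_le : A *ᵥ z ≤ lam • z

theorem IsPositiveSupersolution.mono (hz : IsPositiveSupersolution A lam z) (h : lam ≤ μ) :
    IsPositiveSupersolution A μ z where
  pos := hz.pos
  mulVec_le := hz.mulVec_le.trans fun v => mul_le_mul_of_nonneg_right h (hz.pos v).le

theorem exists_mulVec_eq_smul_of_mem_spectrum [DecidableEq V] (h : μ ∈ spectrum ℝ A) :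
    ∃ y : V → ℝ, y ≠ 0 ∧ A *ᵥ y = μ • y := by
  rw [← Matrix.spectrum_toLin', ← Module.End.hasEigenvalue_iff_mem_spectrum] at h
  obtain ⟨y, hy⟩ := h.exists_hasEigenvector
  exact ⟨y, hy.2, by simpa using hy.apply_eq_smul⟩

theorem IsPositiveSupersolution.abs_le_of_mem_spectrum [DecidableEq V]
    (hz : IsPositiveSupersolution A lam z) (hA : ∀ v w, 0 ≤ A v w) (hμ : μ ∈ spectrum ℝ A) :
    |μ| ≤ lam := by
  obtain ⟨y, hy0, hy⟩ := exists_mulVec_eq_smul_of_mem_spectrum hμ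
  obtain ⟨k, hk⟩ := Function.ne_iff.1 hy0
  obtain ⟨i, -, hi⟩ :=
    Finset.univ.exists_max_image (fun v => |y v| / z v) ⟨k, Finset.mem_univ k⟩
  set c := |y i| / z i
  have hyz : ∀ v, |y v| ≤ c * z v := fun v => (div_le_iff₀ (hz.pos v)).1 (hi v (Finset.mem_univ v))
  have hyi : |y i| = c * z i := (div_mul_cancel₀ _ (hz.pos i).ne').symm
  have hc0 : 0 < c := (div_pos (abs_pos.2 hk) (hz.pos k)).trans_le (hi k (Finset.mem_univ k))
  refine le_of_mul_le_mul_right ?_ (mul_pos hc0 (hz.pos i))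
  calc |μ| * (c * z i) = |(A *ᵥ y) i| := by rw [hy, Pi.smul_apply, smul_eq_mul, abs_mul, hyi]
    _ ≤ ∑ v, |A i v * y v| := Finset.abs_sum_le_sum_abs _ _
    _ ≤ ∑ v, c * (A i v * z v) := Finset.sum_le_sum fun v _ => by
        rw [abs_mul, abs_of_nonneg (hA i v), mul_left_comm]
        exact mul_le_mul_of_nonneg_left (hyz v) (hA i v)
    _ = c * (A *ᵥ z) i := (Finset.mul_sum ..).symm
    _ ≤ c * (lam * z i) := mul_le_mul_of_nonneg_left (hz.mulVec_le i) hc0.le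
    _ = lam * (c * z i) := mul_left_comm ..

-- Replacing the entries of a top eigenvector by their absolute values does not increase the
-- quadratic form of the positive semidefinite matrix `r - A`, so they lie in its kernel as well.
theorem exists_nonneg_mulVec_eq_smul [DecidableEq V] (hA : ∀ v w, 0 ≤ A v w)
    (hAs : A.IsHermitian) (hr : IsGreatest (spectrum ℝ A) r) :
    ∃ z : V → ℝ, 0 ≤ z ∧ z ≠ 0 ∧ A *ᵥ z = r • z := by
  open scoped MatrixOrder in
  have hpsd : (algebraMap ℝ (Matrix V V ℝ) r - A).PosSemidef :=
    Matrix.le_iff.1 (le_algebraMap_of_spectrum_le (fun _ hx => hr.2 hx) hAs)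
  have hmul (x : V → ℝ) : (algebraMap ℝ (Matrix V V ℝ) r - A) *ᵥ x = r • x - A *ᵥ x := by
    rw [Matrix.sub_mulVec, Algebra.algebraMap_eq_smul_one, Matrix.smul_mulVec, Matrix.one_mulVec]
  obtain ⟨y, hy0, hy⟩ := exists_mulVec_eq_smul_of_mem_spectrum hr.1
  have hform : |y| ⬝ᵥ (r • |y| - A *ᵥ |y|) ≤ y ⬝ᵥ (r • y - A *ᵥ y) := by
    refine Finset.sum_le_sum fun v _ => ?_
    have hdiag : |y v| * (r * |y v|) = y v * (r * y v) := by
      rw [mul_left_comm, abs_mul_abs_self, mul_left_comm]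
    have hoff : y v * (A *ᵥ y) v ≤ |y v| * (A *ᵥ |y|) v := by
      simp only [Matrix.mulVec, dotProduct, Finset.mul_sum]
      refine Finset.sum_le_sum fun w _ => (le_abs_self _).trans_eq ?_
      rw [abs_mul, abs_mul, abs_of_nonneg (hA v w), Pi.abs_apply]
    simp only [Pi.sub_apply, Pi.smul_apply, Pi.abs_apply, smul_eq_mul, mul_sub]
    linarith
  have hker : (algebraMap ℝ (Matrix V V ℝ) r - A) *ᵥ |y| = 0 := by
    refine (hpsd.dotProduct_mulVec_zero_iff _).1 (le_antisymm ?_ (hpsd.dotProduct_mulVec_nonneg _))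
    rw [hmul, star_trivial]
    exact hform.trans_eq (by rw [hy, sub_self, dotProduct_zero])
  refine ⟨|y|, abs_nonneg y, by simpa using hy0, ?_⟩
  rwa [hmul, sub_eq_zero, eq_comm] at hker

end PositiveSupersolution

section Perron

variable {V : Type*} {G : SimpleGraph V} {u w x : V} {S : Finset V} {z : V → ℝ} {lam : ℝ}

theorem adjMat_of_adj (h : G.Adj u w) : adjMat G u w = 1 :=
  if_pos h

theorem adjMat_of_not_adj (h : ¬G.Adj u w) : adjMat G u w = 0 :=
  if_neg h

theorem adjMat_nonneg (G : SimpleGraph V) (u w : V) : 0 ≤ adjMat G u w := by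
  by_cases h : G.Adj u w
  · exact zero_le_one.trans_eq (adjMat_of_adj h).symm
  · exact (adjMat_of_not_adj h).ge

theorem adjMat_isHermitian (G : SimpleGraph V) : (adjMat G).IsHermitian := by
  ext u w
  rw [Matrix.conjTranspose_apply, star_trivial]
  by_cases h : G.Adj u w
  · rw [adjMat_of_adj h, adjMat_of_adj h.symm]
  · rw [adjMat_of_not_adj h, adjMat_of_not_adj fun h' => h h'.symm]

theorem adjMat_mulVec_apply [Fintype V] [DecidableRel G.Adj] (z : V → ℝ) (u : V) :
    (adjMat G *ᵥ z) u = ∑ w ∈ G.neighborFinset u, z w := by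
  rw [← adjMatrix_mulVec_apply]
  congr 2
  ext v w
  by_cases h : G.Adj v w <;> simp [h, adjMat_of_adj, adjMat_of_not_adj]

theorem exists_adj_boundary (hG : G.Preconnected) {s : Set V} (hu : u ∈ s) (hw : w ∉ s) :
    ∃ x ∈ s, ∃ y ∉ s, G.Adj x y := by
  obtain ⟨p⟩ := hG u w
  obtain ⟨d, -, hfst, hsnd⟩ := p.exists_boundary_dart s hu hw
  exact ⟨d.fst, hfst, d.snd, hsnd, d.adj⟩

variable [Fintype V]

theorem isGreatest_specRad [DecidableEq V] [Nonempty V] (G : SimpleGraph V) :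
    IsGreatest (spectrum ℝ (adjMat G)) (specRad G) := by
  have hfin : (spectrum ℝ (adjMat G)).Finite := Matrix.finite_spectrum _
  have hne : (spectrum ℝ (adjMat G)).Nonempty :=
    ⟨_, (adjMat_isHermitian G).eigenvalues_mem_spectrum_real (Classical.arbitrary V)⟩
  exact ⟨hne.csSup_mem hfin, fun _ hμ => le_csSup hfin.bddAbove hμ⟩

-- The zero set is closed under adjacency, since `A z ≤ lam z` forces `z` to vanish on all
-- neighbours of a zero.
theorem pos_of_mulVec_le (hG : G.Preconnected) (h0 : 0 ≤ z) (hne : z ≠ 0)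
    (hle : adjMat G *ᵥ z ≤ lam • z) (v : V) : 0 < z v := by
  obtain ⟨k, hk⟩ := Function.ne_iff.1 hne
  refine (h0 v).lt_of_ne' fun hv => ?_
  obtain ⟨x, hx, y, hy, hxy⟩ := exists_adj_boundary hG (s := {x | z x = 0}) hv hk
  refine hy (le_antisymm ?_ (h0 y))
  calc z y = adjMat G x y * z y := by rw [adjMat_of_adj hxy, one_mul]
    _ ≤ (adjMat G *ᵥ z) x := Finset.single_le_sum (f := fun w => adjMat G x w * z w)
        (fun w _ => mul_nonneg (adjMat_nonneg G x w) (h0 w)) (Finset.mem_univ y)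
    _ ≤ lam * z x := hle x
    _ = 0 := by rw [hx, mul_zero]

theorem IsPositiveSupersolution.le_sum_of_adj (hz : IsPositiveSupersolution (adjMat G) lam z)
    (huw : G.Adj u w) (hw : w ∈ S) : z w ≤ ∑ x ∈ S, adjMat G u x * z x := by
  calc z w = adjMat G u w * z w := by rw [adjMat_of_adj huw, one_mul]
    _ ≤ _ := Finset.single_le_sum (f := fun x => adjMat G u x * z x)
        (fun x _ => mul_nonneg (adjMat_nonneg G u x) (hz.pos x).le) hw

theorem IsPositiveSupersolution.eq_of_adj_of_sum_le (hz : IsPositiveSupersolution (adjMat G) lam z)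
    (huw : G.Adj u w) (hw : w ∈ S) (hle : ∑ x ∈ S, adjMat G u x * z x ≤ z w) (hx : x ∈ S)
    (hux : G.Adj u x) : x = w := by
  classical
  by_contra hxw
  have hrest := hz.le_sum_of_adj hux (Finset.mem_erase.2 ⟨hxw, hx⟩)
  rw [← Finset.add_sum_erase S _ hw, adjMat_of_adj huw, one_mul] at hle
  linarith [hz.pos x]

theorem IsPositiveSupersolution.sum_le (hz : IsPositiveSupersolution (adjMat G) lam z)
    (u : V) (S : Finset V) : ∑ x ∈ S, adjMat G u x * z x ≤ lam * z u :=
  (Finset.sum_le_univ_sum_of_nonneg fun x =>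
    mul_nonneg (adjMat_nonneg G u x) (hz.pos x).le).trans (hz.mulVec_le u)

theorem IsPositiveSupersolution.add_sum_le (hz : IsPositiveSupersolution (adjMat G) lam z)
    (huw : G.Adj u w) (hu : u ∉ S) : z u + ∑ x ∈ S, adjMat G w x * z x ≤ lam * z w := by
  classical
  have h := hz.sum_le w (insert u S)
  rwa [Finset.sum_insert hu, adjMat_of_adj huw.symm, one_mul] at h

theorem exists_isPositiveSupersolution_specRad [DecidableEq V] (hG : G.Connected) :
    ∃ z, IsPositiveSupersolution (adjMat G) (specRad G) z := by
  have := hG.nonempty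
  obtain ⟨z, h0, hne, hz⟩ := exists_nonneg_mulVec_eq_smul (adjMat_nonneg G) (adjMat_isHermitian G)
    (isGreatest_specRad G)
  exact ⟨z, pos_of_mulVec_le hG.preconnected h0 hne hz.le, hz.le⟩

end Perron

section PathRatio

variable {t x y : ℝ}

/-- For a path on `k` vertices with end `u`, and `z` the vector of values `sin (j * t)`, indexed by
`j = 1, …, k` with `j = k` at `u`, the quotient of `z` at the neighbour of `u` by `z u` is
`pathRatio t (k * t)`. -/
noncomputable def pathRatio (t x : ℝ) : ℝ :=
  sin (x - t) / sin x

theorem pathRatio_self (t : ℝ) : pathRatio t t = 0 := by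
  rw [pathRatio, sub_self, Real.sin_zero, zero_div]

theorem two_mul_cos_sub_pathRatio (hx : sin x ≠ 0) :
    2 * cos t - pathRatio t x = sin (x + t) / sin x := by
  rw [pathRatio, sub_eq_iff_eq_add, ← add_div, eq_div_iff hx, Real.sin_add, Real.sin_sub]
  ring

theorem pathRatio_add_self (hx : sin x ≠ 0) :
    pathRatio t (x + t) = (2 * cos t - pathRatio t x)⁻¹ := by
  rw [two_mul_cos_sub_pathRatio hx, inv_div, pathRatio, add_sub_cancel_right]

theorem pathRatio_lt_two_mul_cos (hx : 0 < sin x) (hxt : 0 < sin (x + t)) :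
    pathRatio t x < 2 * cos t := by
  rw [← sub_pos, two_mul_cos_sub_pathRatio hx.ne']
  exact div_pos hxt hx

theorem pathRatio_eq_two_mul_cos (hx : sin x ≠ 0) (hxt : x + t = π) :
    pathRatio t x = 2 * cos t := by
  rw [eq_comm, ← sub_eq_zero, two_mul_cos_sub_pathRatio hx, hxt, Real.sin_pi, zero_div]

theorem sin_mul_sin_sub_sin_sub_mul_sin_add (a b t : ℝ) :
    sin a * sin b - sin (a - t) * sin (b + t) = sin t * sin (b - a + t) := by
  simp only [Real.sin_add, Real.sin_sub, Real.cos_sub]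
  linear_combination -(sin a * sin b) * Real.sin_sq_add_cos_sq t

theorem pathRatio_add_add_sub (hxt : sin (x + t) ≠ 0) (hy : sin y ≠ 0) (hxy : sin (x + y) ≠ 0) :
    pathRatio t (x + t) + pathRatio t y - pathRatio t (x + y) =
      sin x * sin (y - t) * sin (x + y + t) / (sin (x + t) * sin y * sin (x + y)) := by
  simp only [pathRatio, add_sub_cancel_right]
  rw [div_add_div _ _ hxt hy, div_sub_div _ _ (mul_ne_zero hxt hy) hxy]
  have h₁ := sin_mul_sin_sub_sin_sub_mul_sin_add y (x + y - t) t
  have h₂ := sin_mul_sin_sub_sin_sub_mul_sin_add y (x + y) t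
  rw [sub_add_cancel, show x + y - t - y + t = x by ring] at h₁
  rw [show x + y - y + t = x + t by ring] at h₂
  congr 1
  linear_combination sin x * h₂ - sin (x + t) * h₁

theorem pathRatio_add_lt (ht : 0 < t) (hx : 0 < x) (hy : t < y) (hxy : x + y + t < π) :
    pathRatio t (x + y) < pathRatio t (x + t) + pathRatio t y := by
  have hsin {a : ℝ} (h0 : 0 < a) (ha : a ≤ x + y + t) : 0 < sin a :=
    Real.sin_pos_of_pos_of_lt_pi h0 (ha.trans_lt hxy)
  have hsx := hsin hx (by linarith)
  have hsyt := hsin (sub_pos.2 hy) (by linarith)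
  have hsxyt := hsin (a := x + y + t) (by linarith) le_rfl
  have hsxt := hsin (a := x + t) (by linarith) (by linarith)
  have hsy := hsin (ht.trans hy) (by linarith)
  have hsxy := hsin (a := x + y) (by linarith) (by linarith)
  rw [← sub_pos, pathRatio_add_add_sub hsxt.ne' hsy.ne' hsxy.ne']
  positivity

end PathRatio

section InducedPath

variable {V : Type*} {G : SimpleGraph V} {u w : V} {s : Set V}

/-- The vertices of `s` form an induced path of `G` with end `u`. -/
def IsInducedPathFrom (G : SimpleGraph V) (u : V) (s : Set V) : Prop :=
  ∃ (m : ℕ) (e : pathGraph (m + 1) ↪g G), e 0 = u ∧ Set.range e = s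

theorem isInducedPathFrom_singleton (G : SimpleGraph V) (u : V) : IsInducedPathFrom G u {u} :=
  have : Subsingleton (Fin (0 + 1)) := inferInstanceAs (Subsingleton (Fin 1))
  ⟨0, ⟨⟨fun _ => u, Function.injective_of_subsingleton _⟩, by simp [pathGraph_adj]⟩, rfl,
    Set.range_const⟩

theorem IsInducedPathFrom.insert (h : IsInducedPathFrom G w s) (hu : u ∉ s)
    (hadj : ∀ x ∈ s, G.Adj u x ↔ x = w) : IsInducedPathFrom G u (insert u s) := by
  obtain ⟨m, e, rfl, rfl⟩ := h
  have hue (i : Fin (m + 1)) : G.Adj u (e i) ↔ i = 0 := by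
    rw [hadj _ ⟨i, rfl⟩, e.injective.eq_iff]
  refine ⟨m + 1, ⟨⟨Fin.cons u e, Fin.cons_injective_iff.2 ⟨hu, e.injective⟩⟩, ?_⟩, rfl,
    Fin.range_cons u e⟩
  intro i j
  cases i using Fin.cases <;> cases j using Fin.cases
  · simp
  · refine (hue _).trans ?_
    simp only [pathGraph_adj, Fin.ext_iff, Fin.val_zero, Fin.val_succ]
    omega
  · refine (G.adj_comm _ _).trans ((hue _).trans ?_)
    simp only [pathGraph_adj, Fin.ext_iff, Fin.val_zero, Fin.val_succ]
    omega
  · simp [pathGraph_adj]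

theorem IsInducedPathFrom.nonempty_iso [Fintype V] (h : IsInducedPathFrom G u Set.univ) :
    Nonempty (G ≃g pathGraph (Fintype.card V)) := by
  obtain ⟨m, e, -, he⟩ := h
  let f : pathGraph (m + 1) ≃g G := RelIso.ofSurjective e (Set.range_eq_univ.1 he)
  rw [← Fintype.card_congr f.toEquiv, Fintype.card_fin]
  exact ⟨f.symm⟩

end InducedPath

section HasRootedTree

variable {V : Type*} [DecidableEq V] {G : SimpleGraph V} {u x y : V} {S : Finset V}

/-- `S` is the vertex set of a subtree of `G` with root `u`. The tree is built by joining the roots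
of disjoint trees by an edge; `G` may have further edges between vertices of `S`. -/
inductive HasRootedTree (G : SimpleGraph V) : V → Finset V → Prop
  | singleton (u : V) : HasRootedTree G u {u}
  | graft {u w : V} {A B : Finset V} (huw : G.Adj u w) (hA : HasRootedTree G w A)
      (hB : HasRootedTree G u B) (hAB : Disjoint A B) : HasRootedTree G u (A ∪ B)

theorem HasRootedTree.root_mem (h : HasRootedTree G u S) : u ∈ S := by
  induction h with
  | singleton u => exact Finset.mem_singleton_self u
  | graft _ _ _ _ _ ihB => exact Finset.mem_union_right _ ihB

theorem HasRootedTree.insert (h : HasRootedTree G u S) (hx : x ∉ S) (hy : y ∈ S) (hyx : G.Adj y x) :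
    HasRootedTree G u (insert x S) := by
  induction h with
  | singleton u =>
    rw [Finset.mem_singleton.1 hy] at hyx
    exact .graft hyx (.singleton x) (.singleton u) (Finset.disjoint_singleton_left.2 hx)
  | graft huw hA hB hAB ihA ihB =>
    rw [Finset.notMem_union] at hx
    rcases Finset.mem_union.1 hy with hyA | hyB
    · rw [← Finset.insert_union]
      exact .graft huw (ihA hx.1 hyA) hB (Finset.disjoint_insert_left.2 ⟨hx.2, hAB⟩)
    · rw [← Finset.union_insert]
      exact .graft huw hA (ihB hx.2 hyB) (Finset.disjoint_insert_right.2 ⟨hx.1, hAB⟩)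

theorem hasRootedTree_of_connected_induce (hS : (G.induce (S : Set V)).Connected) (hu : u ∈ S) :
    HasRootedTree G u S := by
  classical
  obtain ⟨T, hT, hmax⟩ := ({T ∈ S.powerset | HasRootedTree G u T}).exists_max_image Finset.card
    ⟨{u}, by simpa [hu] using HasRootedTree.singleton u⟩
  rw [Finset.mem_filter, Finset.mem_powerset] at hT
  obtain ⟨hTS, htree⟩ := hT
  suffices hST : S ⊆ T from hTS.antisymm hST ▸ htree
  by_contra hST
  obtain ⟨v, hvS, hvT⟩ := Finset.not_subset.1 hST
  obtain ⟨y, hyT, x, hxT, hyx⟩ := exists_adj_boundary hS.preconnected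
    (s := {v | v.1 ∈ T}) (u := ⟨u, hu⟩) (w := ⟨v, hvS⟩) htree.root_mem hvT
  have hle := hmax (insert x.1 T) (Finset.mem_filter.2
    ⟨Finset.mem_powerset.2 (Finset.insert_subset x.2 hTS), htree.insert hxT hyT hyx⟩)
  rw [Finset.card_insert_of_notMem hxT] at hle
  omega

end HasRootedTree

section BranchBound

variable {V : Type*} {G : SimpleGraph V} {z : V → ℝ} {t : ℝ} {u w : V} {S A B : Finset V}

theorem sin_card_mul_pos (ht : 0 < t) (hS : S.Nonempty) (hSt : S.card * t < π) :
    0 < sin (S.card * t) :=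
  Real.sin_pos_of_pos_of_lt_pi (mul_pos (Nat.cast_pos.2 hS.card_pos) ht) hSt

theorem pathRatio_mul_le_of_adj [Fintype V]
    (hz : IsPositiveSupersolution (adjMat G) (2 * cos t) z)
    (ht : 0 < t) (hAt : A.card * t + t < π) (huw : G.Adj u w) (hu : u ∉ A) (hw : w ∈ A)
    (hbound : pathRatio t (A.card * t) * z w ≤ ∑ x ∈ A, adjMat G w x * z x) :
    pathRatio t (A.card * t + t) * z u ≤ z w := by
  have hsin : 0 < sin (A.card * t) := sin_card_mul_pos ht ⟨w, hw⟩ (by linarith)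
  have hsin' : 0 < sin (A.card * t + t) := Real.sin_pos_of_pos_of_lt_pi (by positivity) hAt
  rw [pathRatio_add_self hsin.ne',
    inv_mul_le_iff₀ (sub_pos.2 (pathRatio_lt_two_mul_cos hsin hsin'))]
  linarith [hz.add_sum_le huw hu]

theorem sum_le_pathRatio_mul_of_adj [Fintype V]
    (hz : IsPositiveSupersolution (adjMat G) (2 * cos t) z)
    (ht : 0 < t) (hAt : A.card * t + t < π) (huw : G.Adj u w) (hu : u ∉ A) (hw : w ∈ A)
    (hle : ∑ x ∈ A, adjMat G u x * z x ≤ pathRatio t (A.card * t + t) * z u) :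
    ∑ x ∈ A, adjMat G w x * z x ≤ pathRatio t (A.card * t) * z w := by
  have hsin : 0 < sin (A.card * t) := sin_card_mul_pos ht ⟨w, hw⟩ (by linarith)
  have hsin' : 0 < sin (A.card * t + t) := Real.sin_pos_of_pos_of_lt_pi (by positivity) hAt
  have hzw := (hz.le_sum_of_adj huw hw).trans hle
  rw [pathRatio_add_self hsin.ne',
    le_inv_mul_iff₀ (sub_pos.2 (pathRatio_lt_two_mul_cos hsin hsin'))] at hzw
  linarith [hz.add_sum_le huw hu]

theorem card_mul_add_lt_of_subset {c : ℝ} (ht : 0 < t) (hAB : A ⊆ B) (hB : B.card * t + t < c) :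
    A.card * t + t < c := by
  refine lt_of_le_of_lt ?_ hB
  gcongr

variable [DecidableEq V]

theorem HasRootedTree.pathRatio_card_union_lt (hA : HasRootedTree G w A) (hAB : Disjoint A B)
    (hB : 1 < B.card) (ht : 0 < t) (hABt : (A ∪ B).card * t + t < π) :
    pathRatio t ((A ∪ B).card * t) < pathRatio t (A.card * t + t) + pathRatio t (B.card * t) := by
  rw [Finset.card_union_of_disjoint hAB, Nat.cast_add, add_mul] at hABt ⊢
  have hA0 : (0 : ℝ) < A.card := Nat.cast_pos.2 (Finset.card_pos.2 ⟨w, hA.root_mem⟩)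
  exact pathRatio_add_lt ht (mul_pos hA0 ht)
    (lt_mul_of_one_lt_left ht (Nat.one_lt_cast.2 hB)) hABt

theorem HasRootedTree.pathRatio_card_union_le (hA : HasRootedTree G w A) (hAB : Disjoint A B)
    (hB : B.Nonempty) (ht : 0 < t) (hABt : (A ∪ B).card * t + t < π) :
    pathRatio t ((A ∪ B).card * t) ≤ pathRatio t (A.card * t + t) + pathRatio t (B.card * t) := by
  rcases (Nat.one_le_iff_ne_zero.2 hB.card_ne_zero).eq_or_lt with hB1 | hB1
  · rw [Finset.card_union_of_disjoint hAB, ← hB1, Nat.cast_add, Nat.cast_one, add_one_mul,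
      one_mul, pathRatio_self, add_zero]
  · exact (hA.pathRatio_card_union_lt hAB hB1 ht hABt).le

variable [Fintype V]

theorem pathRatio_add_mul_le_sum_union (hz : IsPositiveSupersolution (adjMat G) (2 * cos t) z)
    (ht : 0 < t) (hAt : A.card * t + t < π) (huw : G.Adj u w) (hw : w ∈ A) (hu : u ∈ B)
    (hAB : Disjoint A B)
    (hA : pathRatio t (A.card * t) * z w ≤ ∑ x ∈ A, adjMat G w x * z x)
    (hB : pathRatio t (B.card * t) * z u ≤ ∑ x ∈ B, adjMat G u x * z x) :
    (pathRatio t (A.card * t + t) + pathRatio t (B.card * t)) * z u ≤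
      ∑ x ∈ A ∪ B, adjMat G u x * z x := by
  rw [Finset.sum_union hAB, add_mul]
  have huA : u ∉ A := Finset.disjoint_right.1 hAB hu
  exact add_le_add ((pathRatio_mul_le_of_adj hz ht hAt huw huA hw hA).trans
    (hz.le_sum_of_adj huw hw)) hB

theorem HasRootedTree.pathRatio_mul_le_sum (h : HasRootedTree G u S)
    (hz : IsPositiveSupersolution (adjMat G) (2 * cos t) z) (ht : 0 < t)
    (hSt : S.card * t + t < π) :
    pathRatio t (S.card * t) * z u ≤ ∑ x ∈ S, adjMat G u x * z x := by
  induction h with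
  | singleton u => simp [pathRatio_self, adjMat_of_not_adj]
  | @graft u w A B huw hA hB hAB ihA ihB =>
    have hAt := card_mul_add_lt_of_subset ht Finset.subset_union_left hSt
    have hBt := card_mul_add_lt_of_subset ht Finset.subset_union_right hSt
    calc pathRatio t ((A ∪ B).card * t) * z u
        ≤ (pathRatio t (A.card * t + t) + pathRatio t (B.card * t)) * z u :=
          mul_le_mul_of_nonneg_right
            (hA.pathRatio_card_union_le hAB ⟨u, hB.root_mem⟩ ht hSt) (hz.pos u).le
      _ ≤ ∑ x ∈ A ∪ B, adjMat G u x * z x :=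
          pathRatio_add_mul_le_sum_union hz ht hAt huw hA.root_mem hB.root_mem hAB
            (ihA hAt) (ihB hBt)

theorem HasRootedTree.adj_iff_eq_root_of_sum_le (hA : HasRootedTree G w A)
    (hz : IsPositiveSupersolution (adjMat G) (2 * cos t) z) (ht : 0 < t)
    (hAt : A.card * t + t < π) (huw : G.Adj u w) (hu : u ∉ A)
    (hle : ∑ x ∈ A, adjMat G u x * z x ≤ pathRatio t (A.card * t + t) * z u) {x : V} (hx : x ∈ A) :
    G.Adj u x ↔ x = w := by
  refine ⟨hz.eq_of_adj_of_sum_le huw hA.root_mem (hle.trans ?_) hx, fun h => h ▸ huw⟩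
  exact pathRatio_mul_le_of_adj hz ht hAt huw hu hA.root_mem (hA.pathRatio_mul_le_sum hz ht hAt)

theorem HasRootedTree.isInducedPathFrom_of_sum_le (h : HasRootedTree G u S)
    (hz : IsPositiveSupersolution (adjMat G) (2 * cos t) z) (ht : 0 < t)
    (hSt : S.card * t + t < π)
    (hle : ∑ x ∈ S, adjMat G u x * z x ≤ pathRatio t (S.card * t) * z u) :
    IsInducedPathFrom G u S := by
  induction h with
  | singleton u => simpa only [Finset.coe_singleton] using isInducedPathFrom_singleton G u
  | @graft u w A B huw hA hB hAB ihA ihB =>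
    have hAt := card_mul_add_lt_of_subset ht Finset.subset_union_left hSt
    have hBt := card_mul_add_lt_of_subset ht Finset.subset_union_right hSt
    have huA : u ∉ A := Finset.disjoint_right.1 hAB hB.root_mem
    have hB1 : B.card ≤ 1 := not_lt.1 fun hB1 => hle.not_gt <|
      (mul_lt_mul_of_pos_right (hA.pathRatio_card_union_lt hAB hB1 ht hSt) (hz.pos u)).trans_le <|
        pathRatio_add_mul_le_sum_union hz ht hAt huw hA.root_mem hB.root_mem hAB
          (hA.pathRatio_mul_le_sum hz ht hAt) (hB.pathRatio_mul_le_sum hz ht hBt)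
    obtain rfl : B = {u} := Finset.eq_singleton_iff_unique_mem.2
      ⟨hB.root_mem, fun x hx => Finset.card_le_one.1 hB1 x hx u hB.root_mem⟩
    have hleA : ∑ x ∈ A, adjMat G u x * z x ≤ pathRatio t (A.card * t + t) * z u := by
      rwa [Finset.sum_union hAB, Finset.sum_singleton, adjMat_of_not_adj G.irrefl, zero_mul,
        add_zero, Finset.card_union_of_disjoint hAB, Finset.card_singleton, Nat.cast_add,
        Nat.cast_one, add_one_mul] at hle
    rw [Finset.coe_union, Finset.coe_singleton, Set.union_singleton]
    exact (ihA hAt (sum_le_pathRatio_mul_of_adj hz ht hAt huw huA hA.root_mem hleA)).insert huA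
      fun x hx => hA.adj_iff_eq_root_of_sum_le hz ht hAt huw huA hleA hx

end BranchBound

section PathGraph

theorem IsPositiveSupersolution.nonempty_iso_pathGraph {V : Type*} [Fintype V] {G : SimpleGraph V}
    {z : V → ℝ} {t : ℝ}
    (hz : IsPositiveSupersolution (adjMat G) (2 * cos t) z) (hG : G.Connected)
    (ht : Fintype.card V * t + t = π) : Nonempty (G ≃g pathGraph (Fintype.card V)) := by
  classical
  suffices ∃ r, IsInducedPathFrom G r Set.univ from this.elim fun _ h => h.nonempty_iso
  rcases subsingleton_or_nontrivial V with hV | hV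
  · obtain ⟨r⟩ := hG.nonempty
    exact ⟨r, Subsingleton.eq_univ_of_nonempty (Set.singleton_nonempty r) ▸
      isInducedPathFrom_singleton G r⟩
  obtain ⟨r, hr⟩ := hG.exists_connected_induce_compl_singleton_of_finite_nontrivial
  obtain ⟨w, hrw⟩ := hG.preconnected.exists_adj_of_nontrivial r
  let A : Finset V := {r}ᶜ
  have hrA : r ∉ A := by simp [A]
  have hA : HasRootedTree G w A :=
    hasRootedTree_of_connected_induce (by rwa [Finset.coe_compl, Finset.coe_singleton])
      (by simpa [A] using hrw.ne')
  have hcard : A.card + 1 = Fintype.card V := Finset.card_compl_add_card {r}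
  have ht0 : 0 < t := by nlinarith [Real.pi_pos]
  have hAπ : A.card * t + t + t = π := by rw [← ht, ← hcard]; push_cast; ring
  have hAt : A.card * t + t < π := by linarith
  have hle : ∑ x ∈ A, adjMat G r x * z x ≤ pathRatio t (A.card * t + t) * z r := by
    rw [pathRatio_eq_two_mul_cos (Real.sin_pos_of_pos_of_lt_pi (by positivity) hAt).ne' hAπ]
    exact hz.sum_le r A
  have hpath := hA.isInducedPathFrom_of_sum_le hz ht0 hAt
    (sum_le_pathRatio_mul_of_adj hz ht0 hAt hrw hrA hA.root_mem hle)
  have huniv : insert r (A : Set V) = Set.univ := by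
    rw [Finset.coe_compl, Finset.coe_singleton, Set.insert_eq, Set.union_compl_self]
  exact ⟨r, huniv ▸ hpath.insert hrA fun x hx =>
    hA.adj_iff_eq_root_of_sum_le hz ht0 hAt hrw hrA hle hx⟩

variable {n : ℕ}

theorem image_neighborFinset_pathGraph_subset (i : Fin n)
    [Fintype ((pathGraph n).neighborSet i)] :
    ((pathGraph n).neighborFinset i).image (fun j : Fin n => j.val + 1) ⊆ {i.val, i.val + 2} := by
  intro k hk
  obtain ⟨j, hj, rfl⟩ := Finset.mem_image.1 hk
  rw [mem_neighborFinset, pathGraph_adj] at hj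
  rw [Finset.mem_insert, Finset.mem_singleton]
  omega

theorem injective_val_add_one : Function.Injective fun j : Fin n => j.val + 1 :=
  (add_left_injective 1).comp Fin.val_injective

theorem degree_pathGraph_le_two (i : Fin n) [Fintype ((pathGraph n).neighborSet i)] :
    (pathGraph n).degree i ≤ 2 := by
  rw [← card_neighborFinset_eq_degree, ← Finset.card_image_of_injective _ injective_val_add_one]
  exact (Finset.card_le_card (image_neighborFinset_pathGraph_subset i)).trans Finset.card_le_two

theorem isPositiveSupersolution_pathGraph {t : ℝ} (ht : n * t + t = π) :
    IsPositiveSupersolution (adjMat (pathGraph n)) (2 * cos t) fun i => sin ((i + 1 : ℕ) * t) := by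
  classical
  have ht0 : 0 < t := by nlinarith [Real.pi_pos]
  have hsin {k : ℕ} (hk : k ≤ n + 1) : 0 ≤ sin (k * t) := by
    refine Real.sin_nonneg_of_nonneg_of_le_pi (by positivity) ?_
    rw [← ht, ← add_one_mul]
    exact mul_le_mul_of_nonneg_right (mod_cast hk) ht0.le
  refine ⟨fun i => Real.sin_pos_of_pos_of_lt_pi (by positivity) ?_, fun i => ?_⟩
  · rw [← ht, ← add_one_mul]
    exact mul_lt_mul_of_pos_right (mod_cast Nat.succ_lt_succ i.isLt) ht0
  calc (adjMat (pathGraph n) *ᵥ fun i => sin ((i + 1 : ℕ) * t)) i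
      = ∑ k ∈ ((pathGraph n).neighborFinset i).image (fun j : Fin n => j.val + 1), sin (k * t) := by
        rw [adjMat_mulVec_apply, Finset.sum_image injective_val_add_one.injOn]
    _ ≤ ∑ k ∈ {i.val, i.val + 2}, sin (k * t) := by
        refine Finset.sum_le_sum_of_subset_of_nonneg (image_neighborFinset_pathGraph_subset i)
          fun k hk _ => hsin ?_
        rw [Finset.mem_insert, Finset.mem_singleton] at hk
        omega
    _ = 2 * cos t * sin ((i + 1 : ℕ) * t) := by
        rw [Finset.sum_pair (by omega), mul_right_comm, Real.two_mul_sin_mul_cos]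
        push_cast
        ring_nf

theorem specRad_pathGraph_le [NeZero n] {t : ℝ} (ht : n * t + t = π) :
    specRad (pathGraph n) ≤ 2 * cos t :=
  (le_abs_self _).trans <| (isPositiveSupersolution_pathGraph ht).abs_le_of_mem_spectrum
    (adjMat_nonneg _) (isGreatest_specRad _).1

end PathGraph

section Domination

variable {V : Type*} [Fintype V] {G : SimpleGraph V}

theorem domNum_le_card {D : Finset V} (hD : IsDomSet G D) : domNum G ≤ D.card :=
  Nat.sInf_le ⟨D, hD, rfl⟩

theorem exists_isDomSet_card_eq_domNum (G : SimpleGraph V) :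
    ∃ D, IsDomSet G D ∧ D.card = domNum G :=
  Nat.sInf_mem (s := {k | ∃ D : Finset V, IsDomSet G D ∧ D.card = k})
    ⟨_, Finset.univ, fun v hv => absurd (Finset.mem_univ v) hv, rfl⟩

theorem card_le_domNum_mul_of_degree_le [DecidableRel G.Adj] {d : ℕ} (hd : ∀ v, G.degree v ≤ d) :
    Fintype.card V ≤ domNum G * (d + 1) := by
  classical
  obtain ⟨D, hD, hcard⟩ := exists_isDomSet_card_eq_domNum G
  have hcover : Finset.univ ⊆ D.biUnion fun u => insert u (G.neighborFinset u) := by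
    intro v _
    rw [Finset.mem_biUnion]
    by_cases hv : v ∈ D
    · exact ⟨v, hv, Finset.mem_insert_self ..⟩
    · obtain ⟨u, hu, huv⟩ := hD v hv
      exact ⟨u, hu, Finset.mem_insert_of_mem ((G.mem_neighborFinset u v).2 huv)⟩
  rw [← hcard, ← Finset.card_univ]
  exact (Finset.card_le_card hcover).trans <| Finset.card_biUnion_le_card_mul _ _ _ fun u _ =>
    (Finset.card_insert_le ..).trans (Nat.succ_le_succ (hd u))

theorem domNum_pathGraph_le (n : ℕ) : domNum (pathGraph n) ≤ (n + 2) / 3 := by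
  let D : Finset (Fin n) := {v | v.val % 3 = 1 ∨ v.val % 3 = 0 ∧ v.val + 1 = n}
  have hmem (v : Fin n) : v ∈ D ↔ v.val % 3 = 1 ∨ v.val % 3 = 0 ∧ v.val + 1 = n := by simp [D]
  have hD : IsDomSet (pathGraph n) D := by
    intro v hv
    rw [hmem] at hv
    simp only [hmem, pathGraph_adj]
    rcases lt_or_ge (v.val % 3) 2 with h | h
    · exact ⟨⟨v + 1, by omega⟩, by grind⟩
    · exact ⟨⟨v - 1, by omega⟩, by grind⟩
  have hinj : Set.InjOn (fun v : Fin n => v.val / 3) D := by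
    intro v hv w hw hvw
    rw [Finset.mem_coe, hmem] at hv hw
    dsimp only at hvw
    omega
  calc domNum (pathGraph n) ≤ D.card := domNum_le_card hD
    _ ≤ (Finset.range ((n + 2) / 3)).card :=
        Finset.card_le_card_of_injOn _ (fun v _ => Finset.mem_coe.2 <|
          Finset.mem_range.2 (by omega)) hinj
    _ = (n + 2) / 3 := Finset.card_range _

theorem domNum_pathGraph (n : ℕ) : domNum (pathGraph n) = (n + 2) / 3 := by
  classical
  have hle := domNum_pathGraph_le n
  have hge := card_le_domNum_mul_of_degree_le fun i : Fin n => degree_pathGraph_le_two i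
  rw [Fintype.card_fin] at hge
  omega

end Domination

theorem minimizer_domNum_ceil_third_is_path_general {V : Type*} [Fintype V] [DecidableEq V] {n : ℕ}
    (hcard : Fintype.card V = n) {G : SimpleGraph V} (hconn : G.Connected)
    (hle : specRad G ≤ specRad (pathGraph n)) : Nonempty (G ≃g pathGraph n) := by
  subst hcard
  have := hconn.nonempty
  have ht : Fintype.card V * (π / (Fintype.card V + 1)) + π / (Fintype.card V + 1) = π := by
    rw [← add_one_mul, mul_div_cancel₀ _ (Nat.cast_add_one_ne_zero _)]
  obtain ⟨z, hz⟩ := exists_isPositiveSupersolution_specRad hconn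
  exact (hz.mono (hle.trans (specRad_pathGraph_le ht))).nonempty_iso_pathGraph hconn ht

theorem minimizer_domNum_ceil_third_is_path (n : ℕ) (hn : 2 ≤ n)
    (G : SimpleGraph (Fin n)) (hconn : G.Connected)
    (hdom : domNum G = (n + 2) / 3)
    (hmin : ∀ H : SimpleGraph (Fin n), H.Connected → domNum H = (n + 2) / 3 →
      specRad G ≤ specRad H) :
    Nonempty (G ≃g SimpleGraph.pathGraph n) := by
  obtain ⟨m, rfl⟩ := Nat.exists_eq_succ_of_ne_zero (by omega : n ≠ 0)
  exact minimizer_domNum_ceil_third_is_path_general (Fintype.card_fin _) hconn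
    (hmin _ (pathGraph_connected m) (domNum_pathGraph _))
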